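/- arXiv:1504.02293 — 5 statements merged into one kernel-verified Lean document; each statement's English description precedes it below -/
import Mathlib

section
/- Consider the information subproblem over a finite nonempty index set I with parameters θ_i > 0 (i ∈ I), P_max > 0 and C_I > 0. Suppose ν > 0 is such that the vector P* defined by P*_i = min(P_max, max(0, ν − θ_i)) satisfies ∑_{i∈I} log₂(1 + P*_i/θ_i) = C_I. Then P* is optimal: for every vector (P_i)_{i∈I} with 0 ≤ P_i ≤ P_max for all i and ∑_{i∈I} log₂(1 + P_i/θ_i) ≥ C_I, one has ∑_{i∈I} P*_i ≤ ∑_{i∈I} P_i. -/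
open Finset

/-- Theorem 2 (optimality): the water-filling allocation with water level `ν`
making the rate constraint tight minimizes the total power among all feasible
power allocations of the information subproblem. -/
theorem stmt_4 {ι : Type*} (I : Finset ι) (hI : I.Nonempty)
    (θ : ι → ℝ) (hθ : ∀ i ∈ I, 0 < θ i)
    (Pmax CI ν : ℝ) (hPmax : 0 < Pmax) (hCI : 0 < CI) (hν : 0 < ν)
    (Pstar : ι → ℝ)
    (hPstar : ∀ i ∈ I, Pstar i = min Pmax (max 0 (ν - θ i)))
    (htight : ∑ i ∈ I, Real.logb 2 (1 + Pstar i / θ i) = CI) :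
    ∀ P : ι → ℝ, (∀ i ∈ I, 0 ≤ P i ∧ P i ≤ Pmax) →
      (∑ i ∈ I, Real.logb 2 (1 + P i / θ i) ≥ CI) →
      ∑ i ∈ I, Pstar i ≤ ∑ i ∈ I, P i := by
  intro P hP hrate
  have key : ∀ i ∈ I, ν * (Real.log (1 + P i / θ i) - Real.log (1 + Pstar i / θ i))
      ≤ P i - Pstar i := by
    intro i hi
    have ht := hθ i hi
    obtain ⟨h0, h1⟩ := hP i hi
    have hs := hPstar i hi
    have hs0 : 0 ≤ Pstar i := by
      rw [hs]; exact le_min hPmax.le (le_max_left _ _)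
    have hsl : 0 ≤ (P i - Pstar i) * (θ i + Pstar i - ν) := by
      rcases le_total Pmax (max 0 (ν - θ i)) with h | h
      · rw [min_eq_left h] at hs
        rcases le_total 0 (ν - θ i) with h' | h'
        · rw [max_eq_right h'] at h
          exact mul_nonneg_of_nonpos_of_nonpos (by linarith) (by linarith)
        · rw [max_eq_left h'] at h
          linarith
      · rw [min_eq_right h] at hs
        rcases le_total 0 (ν - θ i) with h' | h'
        · rw [max_eq_right h'] at hs
          rw [hs]; ring_nf; exact le_refl _
        · rw [max_eq_left h'] at hs
          exact mul_nonneg (by linarith) (by linarith)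
    have hA : 0 < θ i + Pstar i := by linarith
    have hB : 0 < θ i + P i := by linarith
    have e : Real.log (1 + P i / θ i) - Real.log (1 + Pstar i / θ i)
        = Real.log ((θ i + P i) / (θ i + Pstar i)) := by
      rw [← Real.log_div (by positivity) (by positivity)]
      congr 1
      field_simp
    have hl := Real.log_le_sub_one_of_pos (div_pos hB hA)
    rw [e]
    refine (mul_le_mul_of_nonneg_left hl hν.le).trans ?_
    have e2 : ν * ((θ i + P i) / (θ i + Pstar i) - 1)
        = ν * (P i - Pstar i) / (θ i + Pstar i) := by
      field_simp
      ring
    rw [e2, div_le_iff₀ hA]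
    nlinarith
  have hsum := Finset.sum_le_sum key
  rw [← Finset.mul_sum, Finset.sum_sub_distrib, Finset.sum_sub_distrib] at hsum
  have h2 : 0 < Real.log 2 := Real.log_pos (by norm_num)
  have hr : ∑ i ∈ I, Real.log (1 + Pstar i / θ i) ≤ ∑ i ∈ I, Real.log (1 + P i / θ i) := by
    rw [← htight] at hrate
    simp only [Real.logb, ← Finset.sum_div] at hrate
    exact (div_le_div_iff_of_pos_right h2).1 hrate
  have := mul_nonneg hν.le (sub_nonneg.2 hr)
  linarith
end

section
/- Let I be a finite nonempty index set, θ_i > 0 for i ∈ I, P_max > 0, C_I > 0, and ν > 0, and define P*_i = min(P_max, max(0, ν − θ_i)). Let I₁ = {i ∈ I : 0 < P*_i < P_max} and I₂ = {i ∈ I : P*_i = P_max}, and suppose I₁ is nonempty. If ∑_{i∈I} log₂(1 + P*_i/θ_i) = C_I, then ν^{|I₁|} = 2^{C_I} · (∏_{i∈I₁} θ_i) / (∏_{i∈I₂} (1 + P_max/θ_i)); equivalently ν = ρ^{1/|I₁|} with ρ = 2^{C_I} ∏_{i∈I₁} θ_i / ∏_{i∈I₂} (1 + P_max/θ_i). 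-/
open Finset

/-- Theorem 2, equation (16): formula for the Lagrange multiplier `ν` of the
tight rate constraint under the water-filling allocation. -/
theorem stmt_5 {ι : Type*} [DecidableEq ι] (I : Finset ι) (hI : I.Nonempty)
    (θ : ι → ℝ) (hθ : ∀ i ∈ I, 0 < θ i)
    (Pmax CI ν : ℝ) (hPmax : 0 < Pmax) (hCI : 0 < CI) (hν : 0 < ν)
    (Pstar : ι → ℝ)
    (hPstar : ∀ i ∈ I, Pstar i = min Pmax (max 0 (ν - θ i)))
    (I₁ I₂ : Finset ι)
    (hI₁ : I₁ = I.filter (fun i => 0 < Pstar i ∧ Pstar i < Pmax))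
    (hI₂ : I₂ = I.filter (fun i => Pstar i = Pmax))
    (hI₁ne : I₁.Nonempty)
    (htight : ∑ i ∈ I, Real.logb 2 (1 + Pstar i / θ i) = CI) :
    ν ^ (I₁.card) =
      (2 : ℝ) ^ CI * (∏ i ∈ I₁, θ i) / (∏ i ∈ I₂, (1 + Pmax / θ i)) := by
  have hP0 : ∀ i ∈ I, 0 ≤ Pstar i := fun i hi => by
    rw [hPstar i hi]; exact le_min hPmax.le (le_max_left _ _)
  have hpos : ∀ i ∈ I, 0 < 1 + Pstar i / θ i := fun i hi => by
    have := div_nonneg (hP0 i hi) (hθ i hi).le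
    linarith
  have h2 : (2 : ℝ) ^ CI = ∏ i ∈ I, (1 + Pstar i / θ i) := by
    rw [← htight, Real.rpow_sum_of_pos (by norm_num)]
    exact Finset.prod_congr rfl fun i hi =>
      Real.rpow_logb (by norm_num) (by norm_num) (hpos i hi)
  have hden : 0 < ∏ i ∈ I₂, (1 + Pmax / θ i) := by
    refine Finset.prod_pos fun i hi => ?_
    rw [hI₂, Finset.mem_filter] at hi
    have := div_pos hPmax (hθ i hi.1)
    linarith
  rw [eq_div_iff hden.ne', h2, ← Finset.prod_const, hI₁, hI₂, Finset.prod_filter,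
    Finset.prod_filter, Finset.prod_filter, ← Finset.prod_mul_distrib,
    ← Finset.prod_mul_distrib]
  refine Finset.prod_congr rfl fun i hi => ?_
  have ht := hθ i hi
  have h0 := hP0 i hi
  have hp := hPstar i hi
  have hle : Pstar i ≤ Pmax := by rw [hp]; exact min_le_left _ _
  by_cases hm : Pstar i = Pmax
  · simp [hm]
  · have hlt := lt_of_le_of_ne hle hm
    by_cases hz : 0 < Pstar i
    · have hv : Pstar i = ν - θ i := by
        rcases min_choice Pmax (max 0 (ν - θ i)) with h | h <;>
        rcases max_choice 0 (ν - θ i) with h' | h' <;> grind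
      rw [if_pos ⟨hz, hlt⟩, if_neg hm, if_pos ⟨hz, hlt⟩, hv]
      field_simp
      ring
    · have : Pstar i = 0 := le_antisymm (not_lt.mp hz) h0
      simp [this, hPmax.ne]
end

section
/- Let I be a finite nonempty index set, θ_i > 0 for i ∈ I, P_max > 0 and C_I > 0. If (P*_i)_{i∈I} is an optimal solution of the information subproblem, then there exists ν ≥ 0 such that for every i ∈ I: P*_i = 0 if ν < θ_i, P*_i = ν − θ_i if θ_i ≤ ν ≤ θ_i + P_max, and P*_i = P_max if ν > θ_i + P_max; that is, P*_i = min(P_max, max(0, ν − θ_i)) for all i ∈ I. -/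
open Finset

lemma exch_sum {ι : Type*} [DecidableEq ι] (I : Finset ι) (P : ι → ℝ) (f : ι → ℝ → ℝ)
    (i j : ι) (hi : i ∈ I) (hj : j ∈ I) (hij : i ≠ j) (x y : ℝ) :
    ∑ k ∈ I, f k (if k = i then x else if k = j then y else P k)
      = ∑ k ∈ I, f k (P k) + (f i x - f i (P i)) + (f j y - f j (P j)) := by
  have hj' : j ∈ I.erase i := Finset.mem_erase.2 ⟨hij.symm, hj⟩
  rw [← Finset.add_sum_erase I _ hi, ← Finset.add_sum_erase _ _ hj',
    ← Finset.add_sum_erase I (fun k => f k (P k)) hi,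
    ← Finset.add_sum_erase _ (fun k => f k (P k)) hj']
  have : ∑ k ∈ (I.erase i).erase j, f k (if k = i then x else if k = j then y else P k)
      = ∑ k ∈ (I.erase i).erase j, f k (P k) := by
    apply Finset.sum_congr rfl
    intro k hk
    simp only [Finset.mem_erase] at hk
    rw [if_neg hk.2.1, if_neg hk.1]
  rw [this]
  simp only [if_true, if_neg hij.symm]
  ring

lemma exch {ι : Type*} (I : Finset ι)
    (θ : ι → ℝ) (hθ : ∀ i ∈ I, 0 < θ i)
    (Pmax CI : ℝ)
    (Pstar : ι → ℝ)
    (hfeas : (∀ i ∈ I, 0 ≤ Pstar i ∧ Pstar i ≤ Pmax) ∧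
      ∑ i ∈ I, Real.logb 2 (1 + Pstar i / θ i) ≥ CI)
    (hopt : ∀ P : ι → ℝ, (∀ i ∈ I, 0 ≤ P i ∧ P i ≤ Pmax) →
      (∑ i ∈ I, Real.logb 2 (1 + P i / θ i) ≥ CI) →
      ∑ i ∈ I, Pstar i ≤ ∑ i ∈ I, P i)
    (i j : ι) (hi : i ∈ I) (hj : j ∈ I) (hPi : 0 < Pstar i) (hPj : Pstar j < Pmax) :
    θ i + Pstar i ≤ θ j + Pstar j := by
  classical
  by_contra! hlt
  have hij : i ≠ j := by rintro rfl; exact lt_irrefl _ hlt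
  obtain ⟨hb, hc⟩ := hfeas
  have ti := hθ i hi
  have tj := hθ j hj
  have bi := hb i hi
  have bj := hb j hj
  obtain ⟨e, he, h1, h2, h3⟩ : ∃ e : ℝ, 0 < e ∧ e ≤ Pstar i ∧ e ≤ Pmax - Pstar j ∧
      e < (θ i + Pstar i) - (θ j + Pstar j) := by
    refine ⟨min (Pstar i) (min (Pmax - Pstar j) (((θ i + Pstar i) - (θ j + Pstar j)) / 2)),
      ?_, min_le_left _ _, (min_le_right _ _).trans (min_le_left _ _), ?_⟩
    · refine lt_min hPi (lt_min ?_ ?_) <;> linarith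
    · refine ((min_le_right _ _).trans (min_le_right _ _)).trans_lt ?_
      linarith
  have hden : 0 < θ i + Pstar i - e := by linarith
  obtain ⟨d, hd⟩ : ∃ d, d = e * (θ j + Pstar j) / (θ i + Pstar i - e) := ⟨_, rfl⟩
  have hd0 : 0 < d := by
    rw [hd]; exact div_pos (mul_pos he (by linarith)) hden
  have hde : d < e := by
    rw [hd, div_lt_iff₀ hden]
    exact mul_lt_mul_of_pos_left (by linarith) he
  have hdm : d * (θ i + Pstar i - e) = e * (θ j + Pstar j) := by
    rw [hd]; field_simp
  have key := hopt (fun k => if k = i then Pstar i - e else if k = j then Pstar j + d else Pstar k)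
    (by
      intro k hk
      have := hb k hk
      split_ifs
      · constructor <;> linarith
      · constructor <;> linarith
      · exact this)
    (by
      have := exch_sum I Pstar (fun k x => Real.logb 2 (1 + x / θ k)) i j hi hj hij
        (Pstar i - e) (Pstar j + d)
      rw [this]
      have p1 : 0 < 1 + (Pstar i - e) / θ i := by
        have : 0 ≤ (Pstar i - e) / θ i := div_nonneg (by linarith) ti.le
        linarith
      have p2 : 0 < 1 + (Pstar j + d) / θ j := by
        have : 0 ≤ (Pstar j + d) / θ j := div_nonneg (by linarith) tj.le
        linarith
      have p3 : 0 < 1 + Pstar i / θ i := by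
        have : 0 ≤ Pstar i / θ i := div_nonneg (by linarith) ti.le
        linarith
      have p4 : 0 < 1 + Pstar j / θ j := by
        have : 0 ≤ Pstar j / θ j := div_nonneg (by linarith) tj.le
        linarith
      have e1 := Real.logb_mul (b := 2) p1.ne' p2.ne'
      have e2 := Real.logb_mul (b := 2) p3.ne' p4.ne'
      have e3 : (1 + (Pstar i - e) / θ i) * (1 + (Pstar j + d) / θ j)
          = (1 + Pstar i / θ i) * (1 + Pstar j / θ j) := by
        field_simp
        linear_combination hdm
      rw [e3] at e1
      linarith)
  have := exch_sum I Pstar (fun k x => x) i j hi hj hij (Pstar i - e) (Pstar j + d)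
  rw [this] at key
  linarith

/-- Theorem 2 (necessity / KKT structure): any optimal solution of the
information subproblem has water-filling form with a common water level `ν`. -/
theorem stmt_8 {ι : Type*} (I : Finset ι) (hI : I.Nonempty)
    (θ : ι → ℝ) (hθ : ∀ i ∈ I, 0 < θ i)
    (Pmax CI : ℝ) (hPmax : 0 < Pmax) (hCI : 0 < CI)
    (Pstar : ι → ℝ)
    (hfeas : (∀ i ∈ I, 0 ≤ Pstar i ∧ Pstar i ≤ Pmax) ∧
      ∑ i ∈ I, Real.logb 2 (1 + Pstar i / θ i) ≥ CI)
    (hopt : ∀ P : ι → ℝ, (∀ i ∈ I, 0 ≤ P i ∧ P i ≤ Pmax) →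
      (∑ i ∈ I, Real.logb 2 (1 + P i / θ i) ≥ CI) →
      ∑ i ∈ I, Pstar i ≤ ∑ i ∈ I, P i) :
    ∃ ν : ℝ, 0 ≤ ν ∧
      (∀ i ∈ I, (ν < θ i → Pstar i = 0) ∧
        (θ i ≤ ν → ν ≤ θ i + Pmax → Pstar i = ν - θ i) ∧
        (θ i + Pmax < ν → Pstar i = Pmax)) ∧
      ∀ i ∈ I, Pstar i = min Pmax (max 0 (ν - θ i)) := by
  obtain ⟨ν, h0, k1, k2⟩ : ∃ ν : ℝ, 0 ≤ ν ∧ (∀ i ∈ I, 0 < Pstar i → θ i + Pstar i ≤ ν) ∧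
      (∀ j ∈ I, Pstar j < Pmax → ν ≤ θ j + Pstar j) := by
    classical
    by_cases hne : (I.filter (fun j => Pstar j < Pmax)).Nonempty
    · obtain ⟨j, hj, hmin⟩ := Finset.exists_min_image _ (fun j => θ j + Pstar j) hne
      rw [Finset.mem_filter] at hj
      refine ⟨θ j + Pstar j, ?_, ?_, ?_⟩
      · linarith [hθ j hj.1, (hfeas.1 j hj.1).1]
      · intro i hi hpi
        exact exch I θ hθ Pmax CI Pstar hfeas hopt i j hi hj.1 hpi hj.2
      · intro k hk hpk
        exact hmin k (Finset.mem_filter.2 ⟨hk, hpk⟩)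
    · obtain ⟨j, hj, hmax⟩ := Finset.exists_max_image I (fun j => θ j + Pstar j) hI
      refine ⟨θ j + Pstar j, ?_, fun i hi _ => hmax i hi, ?_⟩
      · linarith [hθ j hj, (hfeas.1 j hj).1]
      · intro k hk hpk
        exact absurd ⟨k, Finset.mem_filter.2 ⟨hk, hpk⟩⟩ hne
  have main : ∀ i ∈ I, Pstar i = min Pmax (max 0 (ν - θ i)) := by
    intro i hi
    obtain ⟨b0, b1⟩ := hfeas.1 i hi
    have a1 := k1 i hi
    have a2 := k2 i hi
    rcases b0.eq_or_lt with h | h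
    · have := a2 (by linarith)
      rw [max_eq_left (by linarith), min_eq_right hPmax.le, h]
    · have h' := a1 h
      rw [max_eq_right (by linarith)]
      rcases b1.eq_or_lt with g | g
      · rw [min_eq_left (by linarith), g]
      · have := a2 g
        rw [min_eq_right (by linarith)]
        linarith
  refine ⟨ν, h0, ?_, main⟩
  intro i hi
  rw [main i hi]
  refine ⟨fun h => ?_, fun h h' => ?_, fun h => ?_⟩
  · rw [max_eq_left (by linarith), min_eq_right hPmax.le]
  · rw [max_eq_right (by linarith), min_eq_right (by linarith)]
  · rw [max_eq_right (by linarith), min_eq_left (by linarith)]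
end

section
/- Consider the fixed-assignment SWIPT problem with P_max = ∞, and let (P_k)_{k∈I∪E} be a feasible power vector. Let i, j be two distinct indices belonging to the same set (either both i, j ∈ I or both i, j ∈ E) with λ_i ≥ λ_j, P_i = 0 and P_j = c > 0. Define Q_k = P_k for k ∉ {i, j}, Q_i = c and Q_j = 0. Then (Q_k)_{k∈I∪E} is also feasible and has the same total power as (P_k). -/
open Finset

/-- Feasibility for the fixed-assignment SWIPT problem with `P_max = ∞`. -/
def SwiptFeasible {ι : Type*} [DecidableEq ι] (I E : Finset ι)
    (lam : ι → ℝ) (s CI CEH : ℝ) (P : ι → ℝ) : Prop :=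
  (∀ i ∈ I ∪ E, 0 ≤ P i) ∧
  (∑ i ∈ I, Real.logb 2 (1 + P i * lam i / (1 + s * ∑ j ∈ I ∪ E, P j)) ≥ CI) ∧
  (∑ i ∈ E, (P i * lam i + s * ∑ j ∈ I ∪ E, P j) ≥ CEH)

theorem swipt_sum_le_of_pair {ι : Type*} [DecidableEq ι] (S : Finset ι) (f g : ι → ℝ)
    (i j : ι) (hij : i ≠ j) (hi : i ∈ S) (hj : j ∈ S)
    (h : f i + f j ≤ g i + g j) (hk : ∀ k, k ≠ i → k ≠ j → f k = g k) :
    ∑ k ∈ S, f k ≤ ∑ k ∈ S, g k := by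
  have hj' : j ∈ S.erase i := Finset.mem_erase.2 ⟨hij.symm, hj⟩
  rw [← Finset.add_sum_erase S f hi, ← Finset.add_sum_erase S g hi,
    ← Finset.add_sum_erase _ f hj', ← Finset.add_sum_erase _ g hj']
  have : ∑ k ∈ (S.erase i).erase j, f k = ∑ k ∈ (S.erase i).erase j, g k := by
    apply Finset.sum_congr rfl
    intro k hkm
    simp only [Finset.mem_erase] at hkm
    exact hk k hkm.2.1 hkm.1
  linarith

/-- Remark 2 (exchange argument): moving power from a weaker eigenchannel to a
stronger zero-power eigenchannel of the same type preserves feasibility and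
total power. -/
theorem stmt_13 {ι : Type*} [DecidableEq ι] (I E : Finset ι)
    (hIE : Disjoint I E) (hI : I.Nonempty) (hE : E.Nonempty)
    (lam : ι → ℝ) (hlam : ∀ i ∈ I ∪ E, 0 < lam i)
    (s CI CEH : ℝ) (hs : 0 ≤ s) (hCI : 0 < CI) (hCEH : 0 < CEH)
    (P : ι → ℝ) (hP : SwiptFeasible I E lam s CI CEH P)
    (i j : ι) (hij : i ≠ j)
    (hsame : (i ∈ I ∧ j ∈ I) ∨ (i ∈ E ∧ j ∈ E))
    (hlamij : lam j ≤ lam i)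
    (c : ℝ) (hc : 0 < c) (hPi : P i = 0) (hPj : P j = c)
    (Q : ι → ℝ)
    (hQ : Q = fun k => if k = i then c else if k = j then 0 else P k) :
    SwiptFeasible I E lam s CI CEH Q ∧
    ∑ k ∈ I ∪ E, Q k = ∑ k ∈ I ∪ E, P k := by
  have hQi : Q i = c := by simp [hQ]
  have hQj : Q j = 0 := by simp [hQ, hij.symm]
  have hQk : ∀ k, k ≠ i → k ≠ j → Q k = P k := by
    intro k h1 h2
    simp [hQ, h1, h2]
  have hiU : i ∈ I ∪ E := by
    rcases hsame with h | h
    · exact Finset.mem_union_left _ h.1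
    · exact Finset.mem_union_right _ h.1
  have hjU : j ∈ I ∪ E := by
    rcases hsame with h | h
    · exact Finset.mem_union_left _ h.2
    · exact Finset.mem_union_right _ h.2
  have hsum : ∑ k ∈ I ∪ E, Q k = ∑ k ∈ I ∪ E, P k := by
    apply le_antisymm
    · exact swipt_sum_le_of_pair _ _ _ i j hij hiU hjU (by linarith) hQk
    · exact swipt_sum_le_of_pair _ _ _ i j hij hiU hjU (by linarith)
        (fun k h1 h2 => (hQk k h1 h2).symm)
  refine ⟨?_, hsum⟩
  obtain ⟨h0, h1, h2⟩ := hP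
  have hT : 0 ≤ ∑ k ∈ I ∪ E, P k := Finset.sum_nonneg h0
  unfold SwiptFeasible
  rw [hsum]
  generalize ∑ k ∈ I ∪ E, P k = T at *
  have hD : 0 < 1 + s * T := by positivity
  have hlj := hlam j hjU
  refine ⟨?_, ?_, ?_⟩
  · intro k hk
    by_cases hki : k = i
    · subst hki
      linarith
    by_cases hkj : k = j
    · subst hkj
      linarith
    rw [hQk k hki hkj]
    exact h0 k hk
  · refine le_trans h1 ?_
    rcases hsame with h | h
    · apply swipt_sum_le_of_pair _ _ _ i j hij h.1 h.2
      · rw [hPi, hPj, hQi, hQj]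
        simp only [zero_mul, zero_div, add_zero, Real.logb_one, zero_add]
        apply Real.logb_le_logb_of_le (by norm_num) (by positivity)
        gcongr
      · intro k h1 h2
        rw [hQk k h1 h2]
    · apply le_of_eq
      apply Finset.sum_congr rfl
      intro k hk
      rw [hQk k (fun e => Finset.disjoint_left.1 hIE hk (e ▸ h.1))
        (fun e => Finset.disjoint_left.1 hIE hk (e ▸ h.2))]
  · refine le_trans h2 ?_
    rcases hsame with h | h
    · apply le_of_eq
      apply Finset.sum_congr rfl
      intro k hk
      rw [hQk k (fun e => Finset.disjoint_left.1 hIE h.1 (e ▸ hk))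
        (fun e => Finset.disjoint_left.1 hIE h.2 (e ▸ hk))]
    · apply swipt_sum_le_of_pair _ _ _ i j hij h.1 h.2
      · rw [hPi, hPj, hQi, hQj]
        have := mul_le_mul_of_nonneg_left hlamij hc.le
        linarith
      · intro k h1 h2
        rw [hQk k h1 h2]
end

section
/- Let n ≥ 1, let μ_1 ≥ μ_2 ≥ … ≥ μ_n > 0, let P_max > 0, and let C be a real number with 0 ≤ C ≤ P_max·∑_{i=1}^n μ_i. Define the greedy allocation P*_i = min(P_max, max(0, (C − P_max·∑_{m<i} μ_m)/μ_i)) for i = 1, …, n. Then 0 ≤ P*_i ≤ P_max for all i, ∑_{i=1}^n μ_i P*_i ≥ C, and for every vector (P_i) with 0 ≤ P_i ≤ P_max for all i and ∑_{i=1}^n μ_i P_i ≥ C, one has ∑_{i=1}^n P*_i ≤ ∑_{i=1}^n P_i. -/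
open Finset

/-- Optimality of sequential filling for the energy-harvesting subproblem
(Case 2 of Section IV-B): the minimum-total-power allocation satisfying a
linear constraint `∑ μ_i P_i ≥ C` under box constraints `0 ≤ P_i ≤ P_max` is
obtained by filling eigenchannels sequentially from the largest coefficient
to the smallest. -/
theorem stmt_17 (n : ℕ) (hn : 1 ≤ n) (μ : ℕ → ℝ)
    (hμpos : ∀ i, 1 ≤ i → i ≤ n → 0 < μ i)
    (hμmono : ∀ i j, 1 ≤ i → i ≤ j → j ≤ n → μ j ≤ μ i)
    (Pmax : ℝ) (hPmax : 0 < Pmax)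
    (C : ℝ) (hC0 : 0 ≤ C) (hCle : C ≤ Pmax * ∑ i ∈ Finset.Icc 1 n, μ i)
    (Pstar : ℕ → ℝ)
    (hPstar : ∀ i, 1 ≤ i → i ≤ n →
      Pstar i = min Pmax (max 0 ((C - Pmax * ∑ m ∈ Finset.Ico 1 i, μ m) / μ i))) :
    (∀ i, 1 ≤ i → i ≤ n → 0 ≤ Pstar i ∧ Pstar i ≤ Pmax) ∧
    (∑ i ∈ Finset.Icc 1 n, μ i * Pstar i ≥ C) ∧
    (∀ P : ℕ → ℝ, (∀ i, 1 ≤ i → i ≤ n → 0 ≤ P i ∧ P i ≤ Pmax) →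
      (∑ i ∈ Finset.Icc 1 n, μ i * P i ≥ C) →
      ∑ i ∈ Finset.Icc 1 n, Pstar i ≤ ∑ i ∈ Finset.Icc 1 n, P i) := by
  have hS : ∀ i j, 1 ≤ i → i ≤ j → j ≤ n + 1 →
      Pmax * ∑ m ∈ Finset.Ico 1 i, μ m ≤ Pmax * ∑ m ∈ Finset.Ico 1 j, μ m := by
    intro i j hi hij hj
    apply mul_le_mul_of_nonneg_left _ hPmax.le
    apply Finset.sum_le_sum_of_subset_of_nonneg
    · exact Finset.Ico_subset_Ico_right hij
    · intro m hm _
      rw [Finset.mem_Ico] at hm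
      exact (hμpos m hm.1 (by omega)).le
  have hsucc : ∀ i, 1 ≤ i → Pmax * ∑ m ∈ Finset.Ico 1 (i + 1), μ m
      = Pmax * ∑ m ∈ Finset.Ico 1 i, μ m + Pmax * μ i := by
    intro i hi
    rw [Finset.sum_Ico_succ_top hi, mul_add]
  have hbox : ∀ i, 1 ≤ i → i ≤ n → 0 ≤ Pstar i ∧ Pstar i ≤ Pmax := by
    intro i h1 h2
    rw [hPstar i h1 h2]
    exact ⟨le_min hPmax.le (le_max_left _ _), min_le_left _ _⟩
  have hfull : ∀ i, 1 ≤ i → i ≤ n → Pmax * ∑ m ∈ Finset.Ico 1 (i + 1), μ m ≤ C →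
      Pstar i = Pmax := by
    intro i h1 h2 h
    rw [hsucc i h1] at h
    rw [hPstar i h1 h2]
    apply min_eq_left
    apply le_max_of_le_right
    rw [le_div_iff₀ (hμpos i h1 h2)]
    linarith
  have hzero : ∀ i, 1 ≤ i → i ≤ n → C ≤ Pmax * ∑ m ∈ Finset.Ico 1 i, μ m →
      Pstar i = 0 := by
    intro i h1 h2 h
    rw [hPstar i h1 h2, max_eq_left, min_eq_right hPmax.le]
    exact div_nonpos_of_nonpos_of_nonneg (by linarith) (hμpos i h1 h2).le
  have hmid : ∀ i, 1 ≤ i → i ≤ n → Pmax * ∑ m ∈ Finset.Ico 1 i, μ m ≤ C →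
      C ≤ Pmax * ∑ m ∈ Finset.Ico 1 (i + 1), μ m →
      μ i * Pstar i = C - Pmax * ∑ m ∈ Finset.Ico 1 i, μ m := by
    intro i h1 h2 h h'
    rw [hsucc i h1] at h'
    have hp := hμpos i h1 h2
    rw [hPstar i h1 h2, max_eq_right (div_nonneg (by linarith) hp.le), min_eq_right]
    · field_simp
    · rw [div_le_iff₀ hp]
      linarith
  have hsum : ∀ k, k ≤ n → ∑ i ∈ Finset.Ico 1 (k + 1), μ i * Pstar i
      = min C (Pmax * ∑ m ∈ Finset.Ico 1 (k + 1), μ m) := by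
    intro k
    induction k with
    | zero => intro _; simp [hC0]
    | succ k ih =>
      intro hk
      rw [Finset.sum_Ico_succ_top (by omega), ih (by omega)]
      have hm := hS (k + 1) (k + 1 + 1) (by omega) (by omega) (by omega)
      rcases le_total C (Pmax * ∑ m ∈ Finset.Ico 1 (k + 1), μ m) with h | h
      · rw [hzero (k + 1) (by omega) hk h, min_eq_left h, min_eq_left (h.trans hm)]
        ring
      · rw [min_eq_right h]
        rcases le_total C (Pmax * ∑ m ∈ Finset.Ico 1 (k + 1 + 1), μ m) with h' | h'
        · rw [hmid (k + 1) (by omega) hk h h', min_eq_left h']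
          ring
        · rw [hfull (k + 1) (by omega) hk h', min_eq_right h', hsucc (k + 1) (by omega)]
          ring
  have hI : Finset.Icc 1 n = Finset.Ico 1 (n + 1) := by
    ext m
    simp only [Finset.mem_Icc, Finset.mem_Ico]
    omega
  rw [hI] at hCle ⊢
  have htot : ∑ i ∈ Finset.Ico 1 (n + 1), μ i * Pstar i = C := by
    rw [hsum n le_rfl, min_eq_left hCle]
  refine ⟨hbox, htot.ge, ?_⟩
  intro P hP hPC
  obtain ⟨k, hk1, hkn, hkl, hku⟩ : ∃ k, 1 ≤ k ∧ k ≤ n ∧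
      Pmax * ∑ m ∈ Finset.Ico 1 k, μ m ≤ C ∧
      C ≤ Pmax * ∑ m ∈ Finset.Ico 1 (k + 1), μ m := by
    by_contra! hcon
    have hall : ∀ k, k ≤ n → Pmax * ∑ m ∈ Finset.Ico 1 (k + 1), μ m ≤ C ∧
        (1 ≤ k → Pmax * ∑ m ∈ Finset.Ico 1 (k + 1), μ m < C) := by
      intro k
      induction k with
      | zero => intro _; simp [hC0]
      | succ k ih =>
        intro hk
        have := hcon (k + 1) (by omega) hk (ih (by omega)).1
        exact ⟨this.le, fun _ => this⟩
    linarith [(hall n le_rfl).2 hn]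
  have hkpos := hμpos k hk1 hkn
  have hterm : ∑ i ∈ Finset.Ico 1 (n + 1), μ k * (Pstar i - P i)
      ≤ ∑ i ∈ Finset.Ico 1 (n + 1), μ i * (Pstar i - P i) := by
    apply Finset.sum_le_sum
    intro i hi
    rw [Finset.mem_Ico] at hi
    have hin : i ≤ n := by omega
    obtain ⟨hp0, hp1⟩ := hP i hi.1 hin
    rcases lt_trichotomy i k with h | h | h
    · have hf := hfull i hi.1 hin ((hS (i + 1) k (by omega) h (by omega)).trans hkl)
      rw [hf]
      exact mul_le_mul_of_nonneg_right (hμmono i k hi.1 h.le hkn) (by linarith)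
    · rw [h]
    · have hf := hzero i hi.1 hin (hku.trans (hS (k + 1) i (by omega) h (by omega)))
      rw [hf]
      exact mul_le_mul_of_nonpos_right (hμmono k i hk1 h.le hin) (by linarith)
  simp only [mul_sub, Finset.sum_sub_distrib, ← Finset.mul_sum] at hterm
  rw [htot] at hterm
  have : μ k * ∑ i ∈ Finset.Ico 1 (n + 1), Pstar i ≤ μ k * ∑ i ∈ Finset.Ico 1 (n + 1), P i := by
    linarith
  exact le_of_mul_le_mul_left this hkpos
end
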